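/- Let τ > 0 be real and define u : ℝ → ℂ by u(r) := (1/(2τh)) ∫_ℝ e^{−τ|r−r'|/h} f(r') dr'. Then u is twice differentiable on ℝ and satisfies −h² u''(r) + τ² u(r) = f(r) for every r ∈ ℝ; moreover, for every r > b, u(r) = (1/(2τh)) e^{−τr/h} ∫_a^b e^{τr'/h} f(r') dr', and for every r < a, u(r) = (1/(2τh)) e^{τr/h} ∫_a^b e^{−τr'/h} f(r') dr'. -/

import Mathlib

/-!
With `c = τ / h`, splitting the convolution of `f` with `e^{-c|·|}` at the kink of the kernel
gives `V = L + R`, where `L` integrates `f` over the past `s ≤ r` and `R` over the future `s > r`.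
This is the factorization `c² - ∂² = (c + ∂)(c - ∂)` in disguise: `L' = f - c L` and
`R' = c R - f`. Hence the two copies of `f` cancel in `V' = c (R - L)`, and add up in
`V'' = c² V - 2c f`. On either side of the support of `f` the modulus in the kernel has a constant
sign, so that the kernel becomes a product of a function of `r` and a function of `s`.
-/

open MeasureTheory Filter
open Set Complex

section RealLine

variable {E : Type*} [NormedAddCommGroup E] [NormedSpace ℝ E]

lemma hasDerivAt_setIntegral_Iic [CompleteSpace E] {g : ℝ → E} {r : ℝ} (hg : Continuous g)
    (hgi : IntegrableOn g (Iic r)) :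
    HasDerivAt (fun x ↦ ∫ s in Iic x, g s) (g r) r := by
  have hgi' (x : ℝ) : IntegrableOn g (Iic x) :=
    (hgi.union hg.integrableOn_Icc).mono_set fun s (hs : s ≤ x) ↦
      (le_total s r).imp id fun hrs ↦ ⟨hrs, hs⟩
  have hsplit : (fun x ↦ ∫ s in Iic x, g s) =
      fun x ↦ (∫ s in Iic r, g s) + ∫ s in r..x, g s := by
    ext x
    rw [← intervalIntegral.integral_Iic_sub_Iic hgi (hgi' x), add_sub_cancel]
  rw [hsplit]
  exact (hg.integral_hasStrictDerivAt r r).hasDerivAt.const_add _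

lemma integral_eq_intervalIntegral_of_forall_notMem_Icc {μ : Measure ℝ} [NullSingletonClass μ]
    {g : ℝ → E} {a b : ℝ} (hab : a ≤ b) (hg : ∀ s ∉ Icc a b, g s = 0) :
    ∫ s, g s ∂μ = ∫ s in a..b, g s ∂μ := by
  rw [← setIntegral_eq_integral_of_forall_compl_eq_zero hg, integral_Icc_eq_integral_Ioc,
    intervalIntegral.integral_of_le hab]

end RealLine

section ExponentialKernel

variable {E : Type*} [NormedAddCommGroup E] [NormedSpace ℂ E] {c : ℂ} {f : ℝ → E} {r : ℝ}

/-- The convolution of `f` with the two-sided exponential kernel `e^{-c|·|}`. Up to the factor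
`1 / (2c)` it inverts the operator `c² - ∂²`. -/
noncomputable def expConv (c : ℂ) (f : ℝ → E) (r : ℝ) : E :=
  ∫ s : ℝ, cexp (-c * |r - s|) • f s

/-- The part of `expConv c f r` coming from `s ≤ r`. It inverts the operator `c + ∂`. -/
noncomputable def causalExpConv (c : ℂ) (f : ℝ → E) (r : ℝ) : E :=
  ∫ s in Iic r, cexp (-c * (r - s)) • f s

/-- The part of `expConv c f r` coming from `s > r`. It inverts the operator `c - ∂`. -/
noncomputable def anticausalExpConv (c : ℂ) (f : ℝ → E) (r : ℝ) : E :=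
  ∫ s in Ioi r, cexp (-c * (s - r)) • f s

lemma causalExpConv_eq_smul_setIntegral (c : ℂ) (f : ℝ → E) (r : ℝ) :
    causalExpConv c f r = cexp (-c * r) • ∫ s in Iic r, cexp (c * s) • f s := by
  simp_rw [causalExpConv, ← integral_smul, smul_smul, ← Complex.exp_add]
  ring_nf

lemma anticausalExpConv_eq_causalExpConv_neg (c : ℂ) (f : ℝ → E) (r : ℝ) :
    anticausalExpConv c f r = causalExpConv c (fun s ↦ f (-s)) (-r) := by
  have hreflect := integral_comp_neg_Iic (-r) fun s ↦ cexp (-c * (s - r)) • f s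
  rw [neg_neg] at hreflect
  simp only [anticausalExpConv, causalExpConv, ← hreflect, ofReal_neg, neg_sub_comm]

lemma cexp_mul_abs_sub_smul_eqOn_Iic (c : ℂ) (f : ℝ → E) (r : ℝ) :
    EqOn (fun s : ℝ ↦ cexp (-c * |r - s|) • f s) (fun s ↦ cexp (-c * (r - s)) • f s) (Iic r) :=
  fun s (hs : s ≤ r) ↦ by simp [abs_of_nonneg (sub_nonneg.2 hs)]

lemma cexp_mul_abs_sub_smul_eqOn_Ici (c : ℂ) (f : ℝ → E) (r : ℝ) :
    EqOn (fun s : ℝ ↦ cexp (-c * |r - s|) • f s) (fun s ↦ cexp (-c * (s - r)) • f s) (Ici r) :=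
  fun s (hs : r ≤ s) ↦ by simp [abs_of_nonpos (sub_nonpos.2 hs)]

lemma hasDerivAt_causalExpConv [CompleteSpace E] (hf : Continuous f)
    (hfi : IntegrableOn (fun s : ℝ ↦ cexp (-c * (r - s)) • f s) (Iic r)) :
    HasDerivAt (causalExpConv c f) (f r - c • causalExpConv c f r) r := by
  have hexp : HasDerivAt (fun x : ℝ ↦ cexp (-c * x)) (cexp (-c * r) * -c) r := by
    simpa using ((hasDerivAt_id (r : ℂ)).const_mul (-c)).cexp.comp_ofReal
  have hfi' : IntegrableOn (fun s : ℝ ↦ cexp (c * s) • f s) (Iic r) := by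
    refine IntegrableOn.congr_fun (hfi.smul (cexp (c * r))) (fun s _ ↦ ?_) measurableSet_Iic
    rw [Pi.smul_apply, smul_smul, ← Complex.exp_add]
    ring_nf
  have hpast := hasDerivAt_setIntegral_Iic (by fun_prop) hfi'
  rw [funext (causalExpConv_eq_smul_setIntegral c f)]
  refine (hexp.smul hpast).congr_deriv ?_
  rw [smul_smul, ← Complex.exp_add, mul_comm _ (-c), mul_smul]
  simp [sub_eq_add_neg]

lemma hasDerivAt_anticausalExpConv [CompleteSpace E] (hf : Continuous f)
    (hfi : IntegrableOn (fun s : ℝ ↦ cexp (-c * (s - r)) • f s) (Ioi r)) :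
    HasDerivAt (anticausalExpConv c f) (c • anticausalExpConv c f r - f r) r := by
  have hfi' : IntegrableOn (fun s : ℝ ↦ cexp (-c * ((-r : ℝ) - s)) • f (-s)) (Iic (-r)) := by
    have hreflect := ((Measure.measurePreserving_neg volume).integrableOn_comp_preimage
      (MeasurableEquiv.neg ℝ).measurableEmbedding).2 hfi
    rw [neg_preimage, neg_Ioi, ← integrableOn_Iic_iff_integrableOn_Iio] at hreflect
    simpa only [Function.comp_def, ofReal_neg, neg_sub_comm] using hreflect
  have hcausal := hasDerivAt_causalExpConv (hf.comp continuous_neg) hfi'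
  rw [funext (anticausalExpConv_eq_causalExpConv_neg c f)]
  refine (hcausal.scomp r (hasDerivAt_neg r)).congr_deriv ?_
  simp [Function.comp_def]

lemma integrable_cexp_mul_abs_sub_smul
    (hfi : Integrable fun s : ℝ ↦ cexp (-c * |s|) • f s) (r : ℝ) :
    Integrable fun s : ℝ ↦ cexp (-c * |r - s|) • f s := by
  have hbound (s : ℝ) : ‖cexp (-c * (|r - s| - |s| : ℝ))‖ ≤ Real.exp (|c.re| * |r|) := by
    rw [norm_exp, re_mul_ofReal, Real.exp_le_exp]
    have hreverse : |(|r - s| - |s|)| ≤ |r| := by simpa using abs_abs_sub_abs_le (r - s) (-s)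
    calc (-c).re * (|r - s| - |s|) ≤ |(-c).re * (|r - s| - |s|)| := le_abs_self _
      _ = |c.re| * |(|r - s| - |s|)| := by rw [abs_mul, neg_re, abs_neg]
      _ ≤ |c.re| * |r| := mul_le_mul_of_nonneg_left hreverse (abs_nonneg _)
  have hcont : Continuous fun s : ℝ ↦ cexp (-c * (|r - s| - |s| : ℝ)) := by fun_prop
  refine (hfi.bdd_smul _ hcont.aestronglyMeasurable (.of_forall hbound)).congr
    (.of_forall fun s ↦ ?_)
  dsimp only [Pi.smul_apply']
  rw [smul_smul, ← Complex.exp_add]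
  push_cast
  ring_nf

lemma hasDerivAt_causalExpConv_of_integrable [CompleteSpace E] (hf : Continuous f)
    (hfi : Integrable fun s : ℝ ↦ cexp (-c * |s|) • f s) (r : ℝ) :
    HasDerivAt (causalExpConv c f) (f r - c • causalExpConv c f r) r :=
  hasDerivAt_causalExpConv hf <| (integrable_cexp_mul_abs_sub_smul hfi r).integrableOn.congr_fun
    (cexp_mul_abs_sub_smul_eqOn_Iic c f r) measurableSet_Iic

lemma hasDerivAt_anticausalExpConv_of_integrable [CompleteSpace E] (hf : Continuous f)
    (hfi : Integrable fun s : ℝ ↦ cexp (-c * |s|) • f s) (r : ℝ) :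
    HasDerivAt (anticausalExpConv c f) (c • anticausalExpConv c f r - f r) r :=
  hasDerivAt_anticausalExpConv hf <|
    (integrable_cexp_mul_abs_sub_smul hfi r).integrableOn.congr_fun
      ((cexp_mul_abs_sub_smul_eqOn_Ici c f r).mono Ioi_subset_Ici_self) measurableSet_Ioi

lemma expConv_eq_causalExpConv_add_anticausalExpConv
    (hfi : Integrable fun s : ℝ ↦ cexp (-c * |s|) • f s) :
    expConv c f = causalExpConv c f + anticausalExpConv c f := by
  ext r
  have hfi_r := integrable_cexp_mul_abs_sub_smul hfi r
  rw [expConv, ← intervalIntegral.integral_Iic_add_Ioi hfi_r.integrableOn hfi_r.integrableOn,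
    setIntegral_congr_fun measurableSet_Iic (cexp_mul_abs_sub_smul_eqOn_Iic c f r),
    setIntegral_congr_fun measurableSet_Ioi
      ((cexp_mul_abs_sub_smul_eqOn_Ici c f r).mono Ioi_subset_Ici_self)]
  rfl

lemma hasDerivAt_expConv [CompleteSpace E] (hf : Continuous f)
    (hfi : Integrable fun s : ℝ ↦ cexp (-c * |s|) • f s) (r : ℝ) :
    HasDerivAt (expConv c f) (c • (anticausalExpConv c f r - causalExpConv c f r)) r := by
  rw [expConv_eq_causalExpConv_add_anticausalExpConv hfi]
  refine ((hasDerivAt_causalExpConv_of_integrable hf hfi r).add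
    (hasDerivAt_anticausalExpConv_of_integrable hf hfi r)).congr_deriv ?_
  module

lemma hasDerivAt_deriv_expConv [CompleteSpace E] (hf : Continuous f)
    (hfi : Integrable fun s : ℝ ↦ cexp (-c * |s|) • f s) (r : ℝ) :
    HasDerivAt (deriv (expConv c f)) (c ^ 2 • expConv c f r - (2 * c) • f r) r := by
  rw [funext fun x ↦ (hasDerivAt_expConv hf hfi x).deriv,
    expConv_eq_causalExpConv_add_anticausalExpConv hfi]
  refine (((hasDerivAt_anticausalExpConv_of_integrable hf hfi r).sub
    (hasDerivAt_causalExpConv_of_integrable hf hfi r)).const_smul c).congr_deriv ?_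
  rw [Pi.add_apply]
  module

lemma expConv_eq_smul_integral_of_forall_gt (hf : ∀ s, r < s → f s = 0) :
    expConv c f r = cexp (-c * r) • ∫ s : ℝ, cexp (c * s) • f s := by
  rw [expConv, ← integral_smul]
  refine integral_congr_ae (.of_forall fun s ↦ ?_)
  rcases le_or_gt s r with hs | hs
  · simp only [cexp_mul_abs_sub_smul_eqOn_Iic c f r hs, smul_smul, ← Complex.exp_add]
    ring_nf
  · simp [hf s hs]

lemma expConv_eq_smul_integral_of_forall_lt (hf : ∀ s < r, f s = 0) :
    expConv c f r = cexp (c * r) • ∫ s : ℝ, cexp (-c * s) • f s := by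
  rw [expConv, ← integral_smul]
  refine integral_congr_ae (.of_forall fun s ↦ ?_)
  rcases le_or_gt r s with hs | hs
  · simp only [cexp_mul_abs_sub_smul_eqOn_Ici c f r hs, smul_smul, ← Complex.exp_add]
    ring_nf
  · simp [hf s hs]

end ExponentialKernel

theorem stmt_3_general {E : Type*} [NormedAddCommGroup E] [NormedSpace ℂ E] [CompleteSpace E]
    {h τ : ℂ} (hh : h ≠ 0) (hτ : τ ≠ 0) {f u : ℝ → E} (hf : Continuous f)
    (hfi : Integrable fun r : ℝ ↦ cexp (-τ * |r| / h) • f r)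
    (hu : ∀ r : ℝ, u r = (1 / (2 * τ * h)) • ∫ r' : ℝ, cexp (-τ * |r - r'| / h) • f r') :
    (∀ r : ℝ, DifferentiableAt ℝ u r ∧ DifferentiableAt ℝ (deriv u) r) ∧
    (∀ r : ℝ, -h ^ 2 • deriv (deriv u) r + τ ^ 2 • u r = f r) ∧
    ∀ a b : ℝ, a ≤ b → (∀ r ∉ Icc a b, f r = 0) →
      (∀ r : ℝ, b < r → u r = (1 / (2 * τ * h) * cexp (-τ * r / h)) •
        ∫ r' in a..b, cexp (τ * r' / h) • f r') ∧
      (∀ r : ℝ, r < a → u r = (1 / (2 * τ * h) * cexp (τ * r / h)) •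
        ∫ r' in a..b, cexp (-τ * r' / h) • f r') := by
  simp only [mul_div_right_comm _ _ h, neg_div] at hfi hu ⊢
  have hu_conv : u = (1 / (2 * τ * h)) • expConv (τ / h) f := funext hu
  have hconv (r : ℝ) := (hasDerivAt_expConv hf hfi r).differentiableAt
  have hconv_deriv (r : ℝ) := hasDerivAt_deriv_expConv hf hfi r
  have hu_deriv : deriv u = (1 / (2 * τ * h)) • deriv (expConv (τ / h) f) := by
    ext r
    rw [hu_conv, deriv_const_smul _ (hconv r), Pi.smul_apply]
  refine ⟨fun r ↦ ⟨hu_conv ▸ (hconv r).const_smul _,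
    hu_deriv ▸ (hconv_deriv r).differentiableAt.const_smul _⟩, fun r ↦ ?_, fun a b hab hsupp ↦ ?_⟩
  · rw [hu_deriv, deriv_const_smul _ (hconv_deriv r).differentiableAt, (hconv_deriv r).deriv,
      hu_conv, Pi.smul_apply]
    match_scalars <;> field_simp
    ring
  · have hinterval (w : ℝ → ℂ) : ∫ s, w s • f s = ∫ s in a..b, w s • f s :=
      integral_eq_intervalIntegral_of_forall_notMem_Icc hab fun s hs ↦ by simp [hsupp s hs]
    simp only [hu_conv, Pi.smul_apply, mul_smul, ← hinterval]
    exact ⟨fun r hr ↦ congrArg _ <| expConv_eq_smul_integral_of_forall_gt fun s hs ↦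
        hsupp s fun hs' ↦ (hr.trans hs).not_ge hs'.2,
      fun r hr ↦ congrArg _ <| expConv_eq_smul_integral_of_forall_lt fun s hs ↦
        hsupp s fun hs' ↦ (hs.trans hr).not_ge hs'.1⟩

/-- For real `τ > 0`, the function
`u(r) = (1/(2τh)) ∫ e^{−τ|r−r'|/h} f(r') dr'` is twice differentiable, solves
`−h²u'' + τ²u = f`, and satisfies the decaying representation formulas for
`r > b` and `r < a`. -/
theorem stmt_3 (h : ℝ) (hh : 0 < h) (a b : ℝ) (hab : a ≤ b)
    (f : ℝ → ℂ) (hf : Continuous f)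
    (hsupp : ∀ r : ℝ, r ∉ Set.Icc a b → f r = 0)
    (τ : ℝ) (hτ : 0 < τ)
    (u : ℝ → ℂ)
    (hu : ∀ r : ℝ, u r = ((1 / (2 * τ * h) : ℝ) : ℂ) *
        ∫ r' : ℝ, ((Real.exp (-τ * |r - r'| / h) : ℝ) : ℂ) * f r') :
    (∀ r : ℝ, DifferentiableAt ℝ u r ∧ DifferentiableAt ℝ (deriv u) r) ∧
    (∀ r : ℝ, -(h : ℂ) ^ 2 * deriv (deriv u) r + (τ : ℂ) ^ 2 * u r = f r) ∧
    (∀ r : ℝ, b < r →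
      u r = ((1 / (2 * τ * h) : ℝ) : ℂ) * ((Real.exp (-τ * r / h) : ℝ) : ℂ) *
        ∫ r' in a..b, ((Real.exp (τ * r' / h) : ℝ) : ℂ) * f r') ∧
    (∀ r : ℝ, r < a →
      u r = ((1 / (2 * τ * h) : ℝ) : ℂ) * ((Real.exp (τ * r / h) : ℝ) : ℂ) *
        ∫ r' in a..b, ((Real.exp (-τ * r' / h) : ℝ) : ℂ) * f r') := by
  have hfi : Integrable fun r : ℝ ↦ cexp (-τ * |r| / h) • f r := by
    refine Continuous.integrable_of_hasCompactSupport (by fun_prop)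
      (.intro (isCompact_Icc (a := a) (b := b)) fun r hr ↦ ?_)
    rw [hsupp r hr, smul_zero]
  push_cast at hu ⊢
  obtain ⟨hdiff, hode, hfar⟩ :=
    stmt_3_general (ofReal_ne_zero.2 hh.ne') (ofReal_ne_zero.2 hτ.ne') hf hfi hu
  exact ⟨hdiff, hode, hfar a b hab hsupp⟩
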